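/- arXiv:1909.13347 — 3 statements merged into one kernel-verified Lean document; each statement's English description precedes it below -/
import Mathlib

section
/- Let M be a positive definite Hermitian n×n complex matrix. Then for every C : Matrix n n ℂ the Sylvester equation Y·M + M·Y = C has a unique solution Y (i.e. the linear map Y ↦ Y·M + M·Y is bijective), and the solution satisfies vec Y = (Mᵀ ⊗ I_n + I_n ⊗ M)⁻¹ ·ᵥ vec C. -/
open Matrix
open scoped Kronecker ComplexOrder Matrix

/-- Column-stacking vectorization: `(vecCol X) (j, i) = X i j` (column index listed first). -/
def vecCol {n : Type*} (X : Matrix n n ℂ) : n × n → ℂ := fun p => X p.2 p.1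

section KroneckerSum

variable {R 𝕜 m n : Type*} [DecidableEq m] [DecidableEq n]

/-- The Kronecker sum `A ⊕ B = A ⊗ I + I ⊗ B` of two square matrices. Under column-stacking
vectorization, `kroneckerSum Bᵀ A` is the coefficient matrix of the Sylvester operator
`X ↦ X * B + A * X`. -/
def kroneckerSum [Semiring R] (A : Matrix m m R) (B : Matrix n n R) :
    Matrix (m × n) (m × n) R :=
  A ⊗ₖ (1 : Matrix n n R) + (1 : Matrix m m R) ⊗ₖ B

theorem posDef_kroneckerSum [RCLike 𝕜] [Finite m] [Finite n] {A : Matrix m m 𝕜}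
    {B : Matrix n n 𝕜} (hA : A.PosDef) (hB : B.PosSemidef) : (kroneckerSum A B).PosDef :=
  (hA.kronecker .one).add_posSemidef (PosSemidef.one.kronecker hB)

section Vectorization

variable [Fintype m] [Fintype n]

theorem vec_mul_add_mul [CommSemiring R] (A : Matrix m m R) (B : Matrix n n R)
    (X : Matrix m n R) : vec (X * B + A * X) = kroneckerSum Bᵀ A *ᵥ vec X := by
  rw [kroneckerSum, add_mulVec, kronecker_mulVec_vec, transpose_transpose, Matrix.one_mul,
    ← vec_mul_eq_mulVec, vec_add]

variable [CommRing R] {A : Matrix m m R} {B : Matrix n n R}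

theorem mulVec_bijective_iff_isUnit : Function.Bijective A.mulVec ↔ IsUnit A :=
  ⟨fun h => mulVec_surjective_iff_isUnit.1 h.2,
    fun h => ⟨mulVec_injective_of_isUnit h, mulVec_surjective_iff_isUnit.2 h⟩⟩

theorem bijective_mul_add_mul_iff_isUnit_kroneckerSum :
    Function.Bijective (fun X : Matrix m n R => X * B + A * X) ↔
      IsUnit (kroneckerSum Bᵀ A) := by
  have vec_comp : vec ∘ (fun X : Matrix m n R => X * B + A * X) =
      (kroneckerSum Bᵀ A).mulVec ∘ vec :=
    funext (vec_mul_add_mul A B)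
  rw [← vec_bijective.of_comp_iff', vec_comp, vec_bijective.of_comp_iff,
    mulVec_bijective_iff_isUnit]

theorem vec_eq_inv_kroneckerSum_mulVec (hK : IsUnit (kroneckerSum Bᵀ A)) {C X : Matrix m n R}
    (hX : X * B + A * X = C) : vec X = (kroneckerSum Bᵀ A)⁻¹ *ᵥ vec C := by
  have := hK.invertible
  exact (inv_mulVec_eq_vec (by rw [← hX, vec_mul_add_mul])).symm

end Vectorization

theorem sylvester_posDef_unique_solution_general [RCLike 𝕜] [Fintype m] [Fintype n]
    {A : Matrix m m 𝕜} {B : Matrix n n 𝕜} (hA : A.PosSemidef) (hB : B.PosDef) :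
    Function.Bijective (fun X : Matrix m n 𝕜 => X * B + A * X) ∧
      ∀ C X : Matrix m n 𝕜, X * B + A * X = C →
        vec X = (Bᵀ ⊗ₖ (1 : Matrix m m 𝕜) + (1 : Matrix n n 𝕜) ⊗ₖ A)⁻¹ *ᵥ vec C := by
  have isUnit_kroneckerSum : IsUnit (kroneckerSum Bᵀ A) :=
    (posDef_kroneckerSum hB.transpose hA).isUnit
  exact ⟨bijective_mul_add_mul_iff_isUnit_kroneckerSum.2 isUnit_kroneckerSum,
    fun _ _ => vec_eq_inv_kroneckerSum_mulVec isUnit_kroneckerSum⟩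

end KroneckerSum

/-- **Solvability of the Sylvester equation for a positive definite coefficient.**
For a positive definite Hermitian `M`, the map `Y ↦ Y·M + M·Y` is bijective (so for every `C`
the Sylvester equation `Y·M + M·Y = C` has a unique solution), and every solution satisfies
`vec Y = (Mᵀ ⊗ I + I ⊗ M)⁻¹ ·ᵥ vec C`. -/
theorem sylvester_posDef_unique_solution {n : Type*} [Fintype n] [DecidableEq n] [Nonempty n]
    (M : Matrix n n ℂ) (hM : M.PosDef) :
    Function.Bijective (fun Y : Matrix n n ℂ => Y * M + M * Y) ∧
      ∀ (C Y : Matrix n n ℂ), Y * M + M * Y = C →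
        vecCol Y = (Mᵀ ⊗ₖ (1 : Matrix n n ℂ) + (1 : Matrix n n ℂ) ⊗ₖ M)⁻¹ *ᵥ vecCol C :=
  -- `vecCol` unfolds to `Matrix.vec`.
  sylvester_posDef_unique_solution_general hM.posSemidef hM
end

section
/- Quantum speed limit: let p ≥ 1 be real, let ρ : ℝ → Matrix n n ℂ be entrywise differentiable on the interval [s, t] (s ≤ t), and suppose ‖ρ'(u)‖_p ≤ v for all u ∈ [s, t]. Then |‖ρ(t) − ρ(0)‖_p − ‖ρ(s) − ρ(0)‖_p| ≤ v·(t − s); in particular the distinguishability ‖ρ(t) − ρ(0)‖_p of the evolved state from the initial state changes at rate at most sup_u ‖ρ'(u)‖_p. -/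
/-!
For orthonormal bases `e`, `f`, the `ℓ^p` norm of the diagonal coefficients `⟪fᵢ, X eᵢ⟫` is a
seminorm in `X`. It is at most `‖X‖_p`: by AM-GM, `|⟪fᵢ, X eᵢ⟫|` is dominated by a doubly stochastic
average of the singular values, and Jensen's inequality applies to the convex function `x ↦ x ^ p`.
Equality holds at the bases of a singular value decomposition. Being a maximum of seminorms,
`‖·‖_p` is itself a seminorm. The increment of `‖ρ - ρ 0‖_p` is therefore at most
`‖ρ t - ρ s‖_p`, which the mean value inequality bounds by `v * (t - s)`.
-/

open Matrix
open scoped ComplexOrder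

/-- The Schatten `p`-norm `‖X‖_p = (Σᵢ sᵢ^p)^{1/p}`, where the `sᵢ` are the singular values
of `X`, i.e. the nonnegative square roots of the eigenvalues of `Xᴴ·X`. -/
noncomputable def schattenNorm {n : Type*} [Fintype n] [DecidableEq n]
    (p : ℝ) (X : Matrix n n ℂ) : ℝ :=
  (∑ i, (Real.sqrt ((Matrix.posSemidef_conjTranspose_mul_self X).1.eigenvalues i)) ^ p)
    ^ (1 / p)

open Set Filter Topology
open scoped InnerProductSpace

section MeanValue

variable {E : Type*} [NormedAddCommGroup E] [NormedSpace ℝ E]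

lemma slope_seminorm_sub_le (q : Seminorm ℝ E) (f : ℝ → E) (c : E) {x z : ℝ} (hxz : x < z) :
    slope (fun u => q (f u - c)) x z ≤ q (slope f x z) := by
  have hinv : 0 ≤ (z - x)⁻¹ := inv_nonneg.mpr (sub_nonneg.mpr hxz.le)
  have hq : q (f z - c) - q (f x - c) ≤ q (f z - f x) := by
    simpa using (le_abs_self _).trans (abs_sub_map_le_sub q (f z - c) (f x - c))
  calc slope (fun u => q (f u - c)) x z
      = (z - x)⁻¹ * (q (f z - c) - q (f x - c)) := by rw [slope_def_module, smul_eq_mul]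
    _ ≤ (z - x)⁻¹ * q (f z - f x) := mul_le_mul_of_nonneg_left hq hinv
    _ = q (slope f x z) := by
      rw [slope_def_module, map_smul_eq_mul, Real.norm_of_nonneg hinv]

lemma seminorm_image_sub_le_of_seminorm_deriv_right_le_segment {q : Seminorm ℝ E}
    (hq : Continuous q) {f f' : ℝ → E} {a b C : ℝ} (hf : ContinuousOn f (Icc a b))
    (hf' : ∀ x ∈ Ico a b, HasDerivWithinAt f (f' x) (Ici x) x)
    (bound : ∀ x ∈ Ico a b, q (f' x) ≤ C) {x : ℝ} (hx : x ∈ Icc a b) :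
    q (f x - f a) ≤ C * (x - a) := by
  have hB (y : ℝ) : HasDerivAt (fun u => C * (u - a)) C y := by
    simpa using ((hasDerivAt_id y).sub_const a).const_mul C
  refine image_le_of_liminf_slope_right_le_deriv_boundary
    (hq.comp_continuousOn (hf.sub continuousOn_const)) (by simp)
    (fun y _ => (hB y).continuousAt.continuousWithinAt)
    (fun y _ => (hB y).hasDerivWithinAt) (fun y hy r hr => ?_) hx
  have hslope : Tendsto (slope f y) (𝓝[>] y) (𝓝 (f' y)) :=
    (hasDerivWithinAt_iff_tendsto_slope' self_notMem_Ioi).mp (hf' y hy).Ioi_of_Ici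
  have hlt : ∀ᶠ z in 𝓝[>] y, q (slope f y z) < r :=
    ((hq.tendsto _).comp hslope).eventually_lt_const ((bound y hy).trans_lt hr)
  refine Eventually.frequently ?_
  filter_upwards [hlt, self_mem_nhdsWithin] with z hz hyz
  exact (slope_seminorm_sub_le q f (f a) hyz).trans_lt hz

lemma seminorm_image_sub_le_of_seminorm_deriv_le_segment [FiniteDimensional ℝ E]
    (q : Seminorm ℝ E) {f f' : ℝ → E} {a b C : ℝ}
    (hf : ∀ x ∈ Icc a b, HasDerivWithinAt f (f' x) (Icc a b) x)
    (bound : ∀ x ∈ Ico a b, q (f' x) ≤ C) {x : ℝ} (hx : x ∈ Icc a b) :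
    q (f x - f a) ≤ C * (x - a) :=
  seminorm_image_sub_le_of_seminorm_deriv_right_le_segment
    q.convexOn.locallyLipschitz.continuous (fun y hy => (hf y hy).continuousWithinAt)
    (fun y hy => (hf y (Ico_subset_Icc_self hy)).mono_of_mem_nhdsWithin
      (Icc_mem_nhdsGE_of_mem hy)) bound hx

end MeanValue

lemma hasDerivWithinAt_matrix {𝕜 α m n : Type*} [NontriviallyNormedField 𝕜]
    [NormedAddCommGroup α] [NormedSpace 𝕜 α] [Finite m] [Finite n] {A : 𝕜 → Matrix m n α}
    {A' : Matrix m n α} {s : Set 𝕜} {x : 𝕜} :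
    HasDerivWithinAt A A' s x ↔
      ∀ i j, HasDerivWithinAt (fun r => A r i j) (A' i j) s x := by
  cases nonempty_fintype m
  cases nonempty_fintype n
  exact hasDerivWithinAt_pi.trans (forall_congr' fun _ => hasDerivWithinAt_pi)

lemma sum_map_mulVec_le_sum_map_of_mem_doublyStochastic {n : Type*} [Fintype n] [DecidableEq n]
    {s : Set ℝ} {φ : ℝ → ℝ} (hφ : ConvexOn ℝ s φ) {D : Matrix n n ℝ}
    (hD : D ∈ doublyStochastic ℝ n) {x : n → ℝ} (hx : ∀ j, x j ∈ s) :
    ∑ i, φ ((D *ᵥ x) i) ≤ ∑ j, φ (x j) :=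
  calc ∑ i, φ ((D *ᵥ x) i) ≤ ∑ i, ∑ j, D i j * φ (x j) :=
        Finset.sum_le_sum fun i _ => hφ.map_sum_le (fun _ _ => nonneg_of_mem_doublyStochastic hD)
          (sum_row_of_mem_doublyStochastic hD i) fun j _ => hx j
    _ = ∑ j, (∑ i, D i j) * φ (x j) := by simp_rw [Finset.sum_mul]; exact Finset.sum_comm
    _ = ∑ j, φ (x j) := by simp_rw [sum_col_of_mem_doublyStochastic hD, one_mul]

section OrthonormalBasis

variable {ι 𝕜 E F : Type*} [Fintype ι] [RCLike 𝕜]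
  [NormedAddCommGroup E] [InnerProductSpace 𝕜 E] [NormedAddCommGroup F] [InnerProductSpace 𝕜 F]

/-- The unistochastic matrix `|⟪eᵢ, aⱼ⟫|²` of transition probabilities between two orthonormal
bases. -/
noncomputable def overlapMatrix (e a : OrthonormalBasis ι 𝕜 E) : Matrix ι ι ℝ :=
  Matrix.of fun i j => ‖⟪e i, a j⟫_𝕜‖ ^ 2

lemma overlapMatrix_mem_doublyStochastic [DecidableEq ι] (e a : OrthonormalBasis ι 𝕜 E) :
    overlapMatrix e a ∈ doublyStochastic ℝ ι := by
  refine mem_doublyStochastic_iff_sum.mpr ⟨fun i j => sq_nonneg _, fun i => ?_, fun j => ?_⟩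
  · simp [overlapMatrix, a.sum_sq_norm_inner_left]
  · simp [overlapMatrix, e.sum_sq_norm_inner_right]

variable {T : E →ₗ[𝕜] F} {a : OrthonormalBasis ι 𝕜 E} {b : OrthonormalBasis ι 𝕜 F} {σ : ι → ℝ}

lemma norm_inner_map_le_midpoint_overlapMatrix_mulVec (hT : ∀ j, T (a j) = (σ j : 𝕜) • b j)
    (hσ : ∀ j, 0 ≤ σ j) (e : OrthonormalBasis ι 𝕜 E) (f : OrthonormalBasis ι 𝕜 F) (i : ι) :
    ‖⟪f i, T (e i)⟫_𝕜‖ ≤ (midpoint ℝ (overlapMatrix e a) (overlapMatrix f b) *ᵥ σ) i := by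
  have hexpand : ⟪f i, T (e i)⟫_𝕜 = ∑ j, ⟪a j, e i⟫_𝕜 * (σ j * ⟪f i, b j⟫_𝕜) := by
    conv_lhs => rw [← a.sum_repr' (e i)]
    simp only [map_sum, map_smul, inner_sum, inner_smul_right, hT]
  rw [hexpand]
  refine (norm_sum_le _ _).trans (Finset.sum_le_sum fun j _ => ?_)
  have hamgm := two_mul_le_add_sq ‖⟪e i, a j⟫_𝕜‖ ‖⟪f i, b j⟫_𝕜‖
  calc ‖⟪a j, e i⟫_𝕜 * (σ j * ⟪f i, b j⟫_𝕜)‖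
      = ‖⟪e i, a j⟫_𝕜‖ * ‖⟪f i, b j⟫_𝕜‖ * σ j := by
        rw [norm_mul, norm_mul, RCLike.norm_of_nonneg (hσ j), norm_inner_symm]; ring
    _ ≤ (‖⟪e i, a j⟫_𝕜‖ ^ 2 + ‖⟪f i, b j⟫_𝕜‖ ^ 2) / 2 * σ j :=
        mul_le_mul_of_nonneg_right (by linarith) (hσ j)
    _ = midpoint ℝ (overlapMatrix e a) (overlapMatrix f b) i j * σ j := by
        simp only [midpoint_eq_smul_add, overlapMatrix, Matrix.smul_apply, Matrix.add_apply,
          Matrix.of_apply, smul_eq_mul, invOf_eq_inv]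
        ring

lemma sum_norm_inner_map_rpow_le (hT : ∀ j, T (a j) = (σ j : 𝕜) • b j) (hσ : ∀ j, 0 ≤ σ j)
    (e : OrthonormalBasis ι 𝕜 E) (f : OrthonormalBasis ι 𝕜 F) {p : ℝ} (hp : 1 ≤ p) :
    ∑ i, ‖⟪f i, T (e i)⟫_𝕜‖ ^ p ≤ ∑ j, σ j ^ p := by
  classical
  have hD : midpoint ℝ (overlapMatrix e a) (overlapMatrix f b) ∈ doublyStochastic ℝ ι :=
    convex_doublyStochastic.midpoint_mem (overlapMatrix_mem_doublyStochastic e a)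
      (overlapMatrix_mem_doublyStochastic f b)
  refine le_trans (Finset.sum_le_sum fun i _ => ?_)
    (sum_map_mulVec_le_sum_map_of_mem_doublyStochastic (convexOn_rpow hp) hD hσ)
  exact Real.rpow_le_rpow (norm_nonneg _)
    (norm_inner_map_le_midpoint_overlapMatrix_mulVec hT hσ e f i) (zero_le_one.trans hp)

lemma exists_orthonormalBasis_eq_norm_smul [FiniteDimensional 𝕜 E]
    (hcard : Module.finrank 𝕜 E = Fintype.card ι) {v : ι → E}
    (hv : Pairwise fun i j => ⟪v i, v j⟫_𝕜 = 0) :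
    ∃ b : OrthonormalBasis ι 𝕜 E, ∀ i, v i = (‖v i‖ : 𝕜) • b i := by
  have horth : Orthonormal 𝕜 ({i | v i ≠ 0}.domRestrict fun i => (‖v i‖⁻¹ : 𝕜) • v i) := by
    refine ⟨fun i => norm_smul_inv_norm i.2, fun i j hij => ?_⟩
    simp [inner_smul_left, inner_smul_right, hv (Subtype.coe_injective.ne hij)]
  obtain ⟨b, hb⟩ := horth.exists_orthonormalBasis_extension_of_card_eq hcard
  refine ⟨b, fun i => ?_⟩
  by_cases hi : v i = 0
  · simp [hi]
  · rw [hb i hi, smul_inv_smul₀ (by simpa using hi)]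

/-- The `ℓ^p` norm of the coefficients `⟪fᵢ, T eᵢ⟫`. The Schatten `p`-norm is the maximum of these
seminorms over orthonormal bases `e` and `f`. -/
noncomputable def diagonalSeminorm {p : ℝ} (hp : 1 ≤ p) (e : ι → E) (f : ι → F) :
    Seminorm 𝕜 (E →ₗ[𝕜] F) :=
  haveI : Fact (1 ≤ ENNReal.ofReal p) := ⟨ENNReal.one_le_ofReal.mpr hp⟩
  (normSeminorm 𝕜 (PiLp (ENNReal.ofReal p) fun _ : ι => 𝕜)).comp <|
    (WithLp.linearEquiv (ENNReal.ofReal p) 𝕜 (ι → 𝕜)).symm.toLinearMap ∘ₗ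
      LinearMap.pi fun i => innerₛₗ 𝕜 (f i) ∘ₗ LinearMap.applyₗ (e i)

lemma diagonalSeminorm_apply {p : ℝ} (hp : 1 ≤ p) (e : ι → E) (f : ι → F) (T : E →ₗ[𝕜] F) :
    diagonalSeminorm hp e f T = (∑ i, ‖⟪f i, T (e i)⟫_𝕜‖ ^ p) ^ (1 / p) := by
  have hp0 : 0 < p := zero_lt_one.trans_le hp
  have htoReal : (ENNReal.ofReal p).toReal = p := ENNReal.toReal_ofReal hp0.le
  simp [diagonalSeminorm, PiLp.norm_eq_sum (htoReal.symm ▸ hp0), htoReal]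

end OrthonormalBasis

section SingularValue

variable {m n 𝕜 : Type*} [Fintype m] [Fintype n] [DecidableEq n] [RCLike 𝕜]

/-- The singular values of `X`, indexed in the same order as Mathlib's eigenvalues of `Xᴴ * X`. -/
noncomputable def singularValue (X : Matrix m n 𝕜) (i : n) : ℝ :=
  √((Matrix.posSemidef_conjTranspose_mul_self X).1.eigenvalues i)

lemma singularValue_nonneg (X : Matrix m n 𝕜) (i : n) : 0 ≤ singularValue X i :=
  Real.sqrt_nonneg _

lemma inner_toEuclideanLin_eigenvectorBasis (X : Matrix m n 𝕜) (i j : n) :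
    let hX := (Matrix.posSemidef_conjTranspose_mul_self X).1
    ⟪X.toEuclideanLin (hX.eigenvectorBasis i), X.toEuclideanLin (hX.eigenvectorBasis j)⟫_𝕜 =
      if i = j then (hX.eigenvalues j : 𝕜) else 0 := by
  classical
  intro hX
  have heigen : Xᴴ.toEuclideanLin (X.toEuclideanLin (hX.eigenvectorBasis j)) =
      (hX.eigenvalues j : 𝕜) • hX.eigenvectorBasis j := by
    ext k
    simpa [RCLike.real_smul_eq_coe_mul] using congrFun (hX.mulVec_eigenvectorBasis j) k
  rw [← LinearMap.adjoint_inner_right, ← Matrix.toEuclideanLin_conjTranspose_eq_adjoint, heigen,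
    inner_smul_right, hX.eigenvectorBasis.inner_eq_ite, mul_ite, mul_one, mul_zero]

lemma norm_toEuclideanLin_eigenvectorBasis (X : Matrix m n 𝕜) (i : n) :
    ‖X.toEuclideanLin ((Matrix.posSemidef_conjTranspose_mul_self X).1.eigenvectorBasis i)‖ =
      singularValue X i := by
  rw [@norm_eq_sqrt_re_inner 𝕜, inner_toEuclideanLin_eigenvectorBasis, if_pos rfl,
    RCLike.ofReal_re, singularValue]

lemma exists_orthonormalBasis_toEuclideanLin_eq_singularValue_smul (X : Matrix n n 𝕜) :
    ∃ a b : OrthonormalBasis n 𝕜 (EuclideanSpace 𝕜 n),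
      ∀ i, X.toEuclideanLin (a i) = (singularValue X i : 𝕜) • b i := by
  obtain ⟨b, hb⟩ := exists_orthonormalBasis_eq_norm_smul (𝕜 := 𝕜) finrank_euclideanSpace
    fun i j hij => (inner_toEuclideanLin_eigenvectorBasis X i j).trans (if_neg hij)
  exact ⟨_, b, fun i => (hb i).trans (by rw [norm_toEuclideanLin_eigenvectorBasis])⟩

end SingularValue

section SchattenNorm

variable {n : Type*} [Fintype n] [DecidableEq n] {p : ℝ}

lemma schattenNorm_eq_sum_singularValue (p : ℝ) (X : Matrix n n ℂ) :
    schattenNorm p X = (∑ i, singularValue X i ^ p) ^ (1 / p) := rfl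

lemma diagonalSeminorm_toEuclideanLin_le_schattenNorm (hp : 1 ≤ p)
    (e f : OrthonormalBasis n ℂ (EuclideanSpace ℂ n)) (X : Matrix n n ℂ) :
    diagonalSeminorm hp e f X.toEuclideanLin ≤ schattenNorm p X := by
  obtain ⟨a, b, hX⟩ := exists_orthonormalBasis_toEuclideanLin_eq_singularValue_smul X
  rw [diagonalSeminorm_apply, schattenNorm_eq_sum_singularValue]
  exact Real.rpow_le_rpow (by positivity)
    (sum_norm_inner_map_rpow_le hX (singularValue_nonneg X) e f hp) (by positivity)

lemma exists_diagonalSeminorm_toEuclideanLin_eq_schattenNorm (hp : 1 ≤ p) (X : Matrix n n ℂ) :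
    ∃ e f : OrthonormalBasis n ℂ (EuclideanSpace ℂ n),
      diagonalSeminorm hp e f X.toEuclideanLin = schattenNorm p X := by
  obtain ⟨a, b, hX⟩ := exists_orthonormalBasis_toEuclideanLin_eq_singularValue_smul X
  have hdiag (i : n) : ‖⟪b i, X.toEuclideanLin (a i)⟫_ℂ‖ = singularValue X i := by
    simp [hX, abs_of_nonneg (singularValue_nonneg X i)]
  exact ⟨a, b, by simp only [diagonalSeminorm_apply, hdiag, schattenNorm_eq_sum_singularValue]⟩

lemma schattenNorm_zero (hp : 1 ≤ p) : schattenNorm p (0 : Matrix n n ℂ) = 0 := by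
  obtain ⟨e, f, h⟩ := exists_diagonalSeminorm_toEuclideanLin_eq_schattenNorm hp (0 : Matrix n n ℂ)
  rw [← h, map_zero, map_zero]

lemma schattenNorm_add_le (hp : 1 ≤ p) (X Y : Matrix n n ℂ) :
    schattenNorm p (X + Y) ≤ schattenNorm p X + schattenNorm p Y := by
  obtain ⟨e, f, h⟩ := exists_diagonalSeminorm_toEuclideanLin_eq_schattenNorm hp (X + Y)
  rw [← h, map_add]
  exact (map_add_le_add _ _ _).trans
    (add_le_add (diagonalSeminorm_toEuclideanLin_le_schattenNorm hp e f X)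
      (diagonalSeminorm_toEuclideanLin_le_schattenNorm hp e f Y))

lemma schattenNorm_smul_le (hp : 1 ≤ p) (c : ℂ) (X : Matrix n n ℂ) :
    schattenNorm p (c • X) ≤ ‖c‖ * schattenNorm p X := by
  obtain ⟨e, f, h⟩ := exists_diagonalSeminorm_toEuclideanLin_eq_schattenNorm hp (c • X)
  rw [← h, map_smul, map_smul_eq_mul]
  gcongr
  exact diagonalSeminorm_toEuclideanLin_le_schattenNorm hp e f X

/-- The Schatten `p`-norm for `p ≥ 1`, bundled as a seminorm so that the reverse triangle and mean
value inequalities for seminorms apply. -/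
noncomputable def schattenSeminorm (hp : 1 ≤ p) : Seminorm ℂ (Matrix n n ℂ) :=
  Seminorm.ofSMulLE (schattenNorm p) (schattenNorm_zero hp) (schattenNorm_add_le hp)
    (schattenNorm_smul_le hp)

open scoped Matrix.Norms.Elementwise in
lemma schattenNorm_image_sub_le_of_schattenNorm_deriv_le_segment (hp : 1 ≤ p)
    {A A' : ℝ → Matrix n n ℂ} {a b C : ℝ}
    (hA : ∀ x ∈ Icc a b, HasDerivWithinAt A (A' x) (Icc a b) x)
    (bound : ∀ x ∈ Ico a b, schattenNorm p (A' x) ≤ C) {x : ℝ} (hx : x ∈ Icc a b) :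
    schattenNorm p (A x - A a) ≤ C * (x - a) :=
  seminorm_image_sub_le_of_seminorm_deriv_le_segment
    ((schattenSeminorm hp).restrictScalars ℝ) hA bound hx

end SchattenNorm

/-- **Quantum speed limit for Schatten-`p` distinguishability.**
If `ρ` is entrywise differentiable on `[s, t]` with `‖ρ'(u)‖_p ≤ v` there, then the
distinguishability `‖ρ(·) − ρ(0)‖_p` of the evolved state from the initial state changes
by at most `v·(t − s)` between times `s` and `t`. -/
theorem schatten_quantum_speed_limit {n : Type*} [Fintype n] [DecidableEq n] [Nonempty n]
    (p : ℝ) (hp : 1 ≤ p) (s t : ℝ) (hst : s ≤ t)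
    (ρ : ℝ → Matrix n n ℂ) (ρ' : ℝ → Matrix n n ℂ) (v : ℝ)
    (hderiv : ∀ u ∈ Set.Icc s t, ∀ i j,
      HasDerivWithinAt (fun r => ρ r i j) (ρ' u i j) (Set.Icc s t) u)
    (hbound : ∀ u ∈ Set.Icc s t, schattenNorm p (ρ' u) ≤ v) :
    |schattenNorm p (ρ t - ρ 0) - schattenNorm p (ρ s - ρ 0)| ≤ v * (t - s) := by
  have hincrement : schattenNorm p (ρ t - ρ s) ≤ v * (t - s) :=
    schattenNorm_image_sub_le_of_schattenNorm_deriv_le_segment hp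
      (fun u hu => hasDerivWithinAt_matrix.mpr (hderiv u hu))
      (fun u hu => hbound u (Ico_subset_Icc_self hu)) (right_mem_Icc.mpr hst)
  calc |schattenNorm p (ρ t - ρ 0) - schattenNorm p (ρ s - ρ 0)|
      ≤ schattenNorm p (ρ t - ρ 0 - (ρ s - ρ 0)) :=
        abs_sub_map_le_sub (schattenSeminorm hp) (ρ t - ρ 0) (ρ s - ρ 0)
    _ = schattenNorm p (ρ t - ρ s) := by rw [sub_sub_sub_cancel_right]
    _ ≤ v * (t - s) := hincrement
end

section
/- Let p ≥ 1 be real and let A : ℝ → Matrix n n ℂ be entrywise differentiable at t₀ with derivative A', with A(t) Hermitian for all t and A(t₀) invertible, with real eigenvalues (λ_i) (all nonzero) and corresponding orthonormal eigenvectors (u_i). Then t ↦ ‖A(t)‖_p is differentiable at t₀ with derivative ‖A(t₀)‖_p^{1−p} · Σ_i sgn(λ_i)·|λ_i|^{p−1} · Re⟨u_i, A'·u_i⟩, where ⟨u, w⟩ := Σ_k conj(u_k)·w_k. -/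
open Matrix
open scoped ComplexOrder Matrix

/-!
Let `S` and `T` be self-adjoint with orthonormal eigenbases `v`, `u` and eigenvalues `μ`, `ν`. The
numbers `wᵢⱼ = |⟨uᵢ, vⱼ⟩|²` form a doubly stochastic matrix with `∑ⱼ wᵢⱼ μⱼ = ⟨uᵢ, S uᵢ⟩` and
`∑ᵢ wᵢⱼ (μⱼ - νᵢ)² = ‖(S - T) vⱼ‖²`. Hence
`∑ⱼ f(μⱼ) - ∑ᵢ f(νᵢ) - ∑ᵢ f'(νᵢ) ⟨uᵢ, (S - T) uᵢ⟩` is the `w`-average of the Taylor remainders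
`f(μⱼ) - f(νᵢ) - f'(νᵢ)(μⱼ - νᵢ)`, which is `o(‖S - T‖)`: no eigenvalue or eigenvector of a path
of operators has to be differentiated. The Schatten norm is the case `f(x) = (√x)ᵖ` along `AᴴA`.
-/

open Filter Topology Asymptotics RCLike
open scoped InnerProductSpace

section Eigenbases

variable {𝕜 E ι κ : Type*} [RCLike 𝕜] [NormedAddCommGroup E] [InnerProductSpace 𝕜 E]
  [Fintype ι] [Fintype κ]

/-- The doubly stochastic matrix of squared moduli of the transition coefficients between two
orthonormal bases. It couples the spectra of two self-adjoint operators with these eigenbases. -/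
noncomputable def basisOverlap (u : OrthonormalBasis ι 𝕜 E) (v : OrthonormalBasis κ 𝕜 E)
    (i : ι) (j : κ) : ℝ :=
  ‖⟪u i, v j⟫_𝕜‖ ^ 2

variable {u : OrthonormalBasis ι 𝕜 E} {v : OrthonormalBasis κ 𝕜 E} {S T : E →L[𝕜] E}
  {μ : κ → ℝ} {ν : ι → ℝ}

lemma basisOverlap_nonneg (i : ι) (j : κ) : 0 ≤ basisOverlap u v i j :=
  sq_nonneg _

lemma sum_basisOverlap_right (i : ι) : ∑ j, basisOverlap u v i j = 1 := by
  simp [basisOverlap, v.sum_sq_norm_inner_left]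

lemma sum_basisOverlap_left (j : κ) : ∑ i, basisOverlap u v i j = 1 := by
  simp [basisOverlap, u.sum_sq_norm_inner_right]

variable (u v) in
lemma sum_eq_sum_sum_basisOverlap_mul_left (g : ι → ℝ) :
    ∑ i, g i = ∑ j, ∑ i, basisOverlap u v i j * g i := by
  rw [Finset.sum_comm]
  simp_rw [← Finset.sum_mul, sum_basisOverlap_right, one_mul]

variable (u v) in
lemma sum_eq_sum_sum_basisOverlap_mul_right (g : κ → ℝ) :
    ∑ j, g j = ∑ j, ∑ i, basisOverlap u v i j * g j := by
  simp_rw [← Finset.sum_mul, sum_basisOverlap_left, one_mul]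

lemma inner_apply_of_eigenbasis (hT : ∀ i, T (u i) = (ν i : 𝕜) • u i) (i : ι) (x : E) :
    ⟪u i, T x⟫_𝕜 = ν i * ⟪u i, x⟫_𝕜 := by
  classical
  conv_lhs => rw [← u.sum_repr' x]
  simp [inner_sum, inner_smul_right, hT, u.inner_eq_ite, mul_comm]

lemma sum_basisOverlap_mul_eigenvalue (hS : ∀ j, S (v j) = (μ j : 𝕜) • v j) (i : ι) :
    ∑ j, basisOverlap u v i j * μ j = re ⟪u i, S (u i)⟫_𝕜 := by
  rw [← v.sum_inner_mul_inner, map_sum]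
  refine Finset.sum_congr rfl fun j _ => ?_
  rw [inner_apply_of_eigenbasis hS, mul_left_comm, re_ofReal_mul, inner_mul_symm_re_eq_norm,
    norm_mul, norm_inner_symm (v j), ← sq, mul_comm, basisOverlap]

lemma sum_basisOverlap_mul_sq_sub (hS : ∀ j, S (v j) = (μ j : 𝕜) • v j)
    (hT : ∀ i, T (u i) = (ν i : 𝕜) • u i) (j : κ) :
    ∑ i, basisOverlap u v i j * (μ j - ν i) ^ 2 = ‖(S - T) (v j)‖ ^ 2 := by
  rw [← u.sum_sq_norm_inner_right]
  refine Finset.sum_congr rfl fun i _ => ?_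
  have h : ⟪u i, (S - T) (v j)⟫_𝕜 = ((μ j - ν i : ℝ) : 𝕜) * ⟪u i, v j⟫_𝕜 := by
    rw [_root_.sub_apply, inner_sub_right, hS, inner_smul_right,
      inner_apply_of_eigenbasis hT, ofReal_sub, sub_mul]
  rw [h, norm_mul, norm_ofReal, mul_pow, sq_abs, mul_comm, basisOverlap]

lemma sum_basisOverlap_mul_sq_sub_le (hS : ∀ j, S (v j) = (μ j : 𝕜) • v j)
    (hT : ∀ i, T (u i) = (ν i : 𝕜) • u i) (j : κ) :
    ∑ i, basisOverlap u v i j * (μ j - ν i) ^ 2 ≤ ‖S - T‖ ^ 2 := by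
  rw [sum_basisOverlap_mul_sq_sub hS hT]
  gcongr
  exact (S - T).unit_le_opNorm _ (v.norm_eq_one j).le

lemma sum_basisOverlap_mul_abs_sub_le (hS : ∀ j, S (v j) = (μ j : 𝕜) • v j)
    (hT : ∀ i, T (u i) = (ν i : 𝕜) • u i) (j : κ) :
    ∑ i, basisOverlap u v i j * |μ j - ν i| ≤ ‖S - T‖ := by
  refine le_of_sq_le_sq ?_ (norm_nonneg _)
  calc (∑ i, basisOverlap u v i j * |μ j - ν i|) ^ 2
      ≤ ∑ i, basisOverlap u v i j * |μ j - ν i| ^ 2 :=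
        Real.pow_arith_mean_le_arith_mean_pow _ _ _ (fun i _ => basisOverlap_nonneg i j)
          (sum_basisOverlap_left j) (fun _ _ => abs_nonneg _) 2
    _ ≤ ‖S - T‖ ^ 2 := by
        simpa only [sq_abs] using sum_basisOverlap_mul_sq_sub_le hS hT j

lemma exists_abs_eigenvalue_sub_le (hS : ∀ j, S (v j) = (μ j : 𝕜) • v j)
    (hT : ∀ i, T (u i) = (ν i : 𝕜) • u i) (j : κ) : ∃ i, |μ j - ν i| ≤ ‖S - T‖ := by
  by_contra! h
  have hlt : ∑ i, basisOverlap u v i j * ‖S - T‖ < ∑ i, basisOverlap u v i j * |μ j - ν i| := by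
    obtain ⟨i, -, hi⟩ := Finset.exists_ne_zero_of_sum_ne_zero
      ((sum_basisOverlap_left (u := u) (v := v) j).trans_ne one_ne_zero)
    refine Finset.sum_lt_sum (fun i _ => ?_) ⟨i, Finset.mem_univ i, ?_⟩
    · exact mul_le_mul_of_nonneg_left (h i).le (basisOverlap_nonneg i j)
    · exact mul_lt_mul_of_pos_left (h i) ((basisOverlap_nonneg i j).lt_of_ne' hi)
  rw [← Finset.sum_mul, sum_basisOverlap_left, one_mul] at hlt
  exact hlt.not_ge (sum_basisOverlap_mul_abs_sub_le hS hT j)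

lemma sum_comp_eigenvalue_congr (hμ : ∀ j, T (v j) = (μ j : 𝕜) • v j)
    (hν : ∀ i, T (u i) = (ν i : 𝕜) • u i) (f : ℝ → ℝ) : ∑ j, f (μ j) = ∑ i, f (ν i) := by
  have hzero (i : ι) (j : κ) : basisOverlap u v i j * (f (μ j) - f (ν i)) = 0 := by
    have hsum := sum_basisOverlap_mul_sq_sub hμ hν j
    rw [sub_self, _root_.zero_apply, norm_zero, zero_pow two_ne_zero,
      Finset.sum_eq_zero_iff_of_nonneg fun i _ =>
        mul_nonneg (basisOverlap_nonneg i j) (sq_nonneg _)] at hsum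
    rcases mul_eq_zero.1 (hsum i (Finset.mem_univ i)) with h | h
    · rw [h, zero_mul]
    · rw [sub_eq_zero.1 (pow_eq_zero_iff two_ne_zero |>.1 h), sub_self, mul_zero]
  rw [sum_eq_sum_sum_basisOverlap_mul_right u v fun j => f (μ j),
    sum_eq_sum_sum_basisOverlap_mul_left u v fun i => f (ν i)]
  exact Finset.sum_congr rfl fun j _ => Finset.sum_congr rfl fun i _ =>
    sub_eq_zero.1 ((mul_sub _ _ _).symm.trans (hzero i j))

lemma sum_comp_eigenvalue_sub_eq_sum_remainder (hS : ∀ j, S (v j) = (μ j : 𝕜) • v j)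
    (hT : ∀ i, T (u i) = (ν i : 𝕜) • u i) (f : ℝ → ℝ) (d : ι → ℝ) :
    ∑ j, f (μ j) - ∑ i, f (ν i) - ∑ i, d i * re ⟪u i, (S - T) (u i)⟫_𝕜 =
      ∑ j, ∑ i, basisOverlap u v i j * (f (μ j) - f (ν i) - d i * (μ j - ν i)) := by
  have hinner (i : ι) : re ⟪u i, (S - T) (u i)⟫_𝕜 = ∑ j, basisOverlap u v i j * (μ j - ν i) := by
    simp_rw [mul_sub, Finset.sum_sub_distrib, ← Finset.sum_mul, sum_basisOverlap_right, one_mul,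
      sum_basisOverlap_mul_eigenvalue hS]
    simp [inner_sub_right, hT, inner_smul_right]
  have hlinear : ∑ i, d i * re ⟪u i, (S - T) (u i)⟫_𝕜 =
      ∑ j, ∑ i, basisOverlap u v i j * (d i * (μ j - ν i)) := by
    simp_rw [hinner, Finset.mul_sum, mul_left_comm (d _)]
    exact Finset.sum_comm
  rw [sum_eq_sum_sum_basisOverlap_mul_right u v fun j => f (μ j),
    sum_eq_sum_sum_basisOverlap_mul_left u v fun i => f (ν i), hlinear]
  simp only [mul_sub, Finset.sum_sub_distrib]

end Eigenbases

section TraceFunction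

lemma eventually_abs_taylor_remainder_le {f : ℝ → ℝ} {f' a b ε : ℝ} (ha : HasDerivAt f f' a)
    (hb : ContinuousAt f b) (hε : 0 < ε) :
    ∀ᶠ C in atTop, ∀ᶠ x in 𝓝 b,
      |f x - f a - f' * (x - a)| ≤ ε * |x - a| + C * (x - a) ^ 2 := by
  rcases eq_or_ne b a with rfl | hba
  · filter_upwards [eventually_ge_atTop 0] with C hC
    filter_upwards [(hasDerivAt_iff_isLittleO.1 ha).bound hε] with x hx
    rw [smul_eq_mul, mul_comm (x - b), Real.norm_eq_abs, Real.norm_eq_abs] at hx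
    exact hx.trans (le_add_of_nonneg_right (by positivity))
  · have hsq : 0 < (b - a) ^ 2 := by positivity
    have hrem : ContinuousAt (fun x => |f x - f a - f' * (x - a)|) b := by fun_prop
    have hlarge : Tendsto (fun C : ℝ => C * (b - a) ^ 2) atTop atTop :=
      tendsto_id.atTop_mul_const hsq
    filter_upwards [hlarge.eventually_gt_atTop |f b - f a - f' * (b - a)|] with C hC
    have hquad : ContinuousAt (fun x => C * (x - a) ^ 2) b := by fun_prop
    filter_upwards [hrem.eventually_lt hquad hC] with x hx
    exact hx.le.trans (le_add_of_nonneg_left (by positivity))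

lemma exists_uniform_taylor_remainder_le {ι : Type*} [Finite ι] {f : ℝ → ℝ} {f' ν : ι → ℝ}
    (hf : ∀ i, HasDerivAt f (f' i) (ν i)) {ε : ℝ} (hε : 0 < ε) :
    ∃ C, 0 ≤ C ∧ ∀ᶠ x in 𝓝ˢ (Set.range ν), ∀ i,
      |f x - f (ν i) - f' i * (x - ν i)| ≤ ε * |x - ν i| + C * (x - ν i) ^ 2 := by
  have hC : ∀ᶠ C in atTop, ∀ k i, ∀ᶠ x in 𝓝 (ν k),
      |f x - f (ν i) - f' i * (x - ν i)| ≤ ε * |x - ν i| + C * (x - ν i) ^ 2 :=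
    eventually_all.2 fun k => eventually_all.2 fun i =>
      eventually_abs_taylor_remainder_le (hf i) (hf k).continuousAt hε
  obtain ⟨C, hC, hC0⟩ := (hC.and (eventually_ge_atTop 0)).exists
  exact ⟨C, hC0, eventually_nhdsSet_iff_forall.2 <|
    Set.forall_mem_range.2 fun k => eventually_all.2 (hC k)⟩

variable {𝕜 E ι κ α : Type*} [RCLike 𝕜] [NormedAddCommGroup E] [InnerProductSpace 𝕜 E]
  [Fintype ι] [Fintype κ] {u : OrthonormalBasis ι 𝕜 E} {ν : ι → ℝ}

lemma tendsto_eigenvalue_nhdsSet {l : Filter α} {S : α → E →L[𝕜] E} {T : E →L[𝕜] E}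
    {v : α → OrthonormalBasis κ 𝕜 E} {μ : α → κ → ℝ} (hlim : Tendsto S l (𝓝 T))
    (hS : ∀ a j, S a (v a j) = (μ a j : 𝕜) • v a j)
    (hT : ∀ i, T (u i) = (ν i : 𝕜) • u i) (j : κ) :
    Tendsto (fun a => μ a j) l (𝓝ˢ (Set.range ν)) := by
  rw [(Metric.hasBasis_nhdsSet_thickening (Set.finite_range ν).isCompact).tendsto_right_iff]
  intro δ hδ
  filter_upwards [(tendsto_iff_norm_sub_tendsto_zero.1 hlim).eventually_lt_const hδ] with a ha
  obtain ⟨i, hi⟩ := exists_abs_eigenvalue_sub_le (hS a) hT j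
  exact Metric.mem_thickening_iff.2 ⟨ν i, Set.mem_range_self i, hi.trans_lt ha⟩

theorem isLittleO_sum_comp_eigenvalue {l : Filter α} {S : α → E →L[𝕜] E} {T : E →L[𝕜] E}
    {v : α → OrthonormalBasis κ 𝕜 E} {μ : α → κ → ℝ} (hlim : Tendsto S l (𝓝 T))
    (hS : ∀ a j, S a (v a j) = (μ a j : 𝕜) • v a j) (hT : ∀ i, T (u i) = (ν i : 𝕜) • u i)
    {f : ℝ → ℝ} {f' : ι → ℝ} (hf : ∀ i, HasDerivAt f (f' i) (ν i)) :
    (fun a => ∑ j, f (μ a j) - ∑ i, f (ν i) - ∑ i, f' i * re ⟪u i, (S a - T) (u i)⟫_𝕜)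
      =o[l] fun a => S a - T := by
  refine isLittleO_iff.2 fun c hc => ?_
  set ε := c / (2 * (Fintype.card κ + 1)) with hε_def
  have hε : 0 < ε := by positivity
  obtain ⟨C, hC0, hC⟩ := exists_uniform_taylor_remainder_le hf hε
  have hsmall : ∀ᶠ a in l, C * ‖S a - T‖ < ε := by
    refine Tendsto.eventually_lt_const hε ?_
    simpa using (tendsto_iff_norm_sub_tendsto_zero.1 hlim).const_mul C
  filter_upwards [hsmall, eventually_all.2 fun j =>
    (tendsto_eigenvalue_nhdsSet hlim hS hT j).eventually hC] with a ha hrem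
  have hcol (j : κ) : |∑ i, basisOverlap u (v a) i j *
      (f (μ a j) - f (ν i) - f' i * (μ a j - ν i))| ≤ 2 * ε * ‖S a - T‖ := by
    calc _ ≤ ∑ i, basisOverlap u (v a) i j *
            (ε * |μ a j - ν i| + C * (μ a j - ν i) ^ 2) := by
          refine (Finset.abs_sum_le_sum_abs _ _).trans (Finset.sum_le_sum fun i _ => ?_)
          rw [abs_mul, abs_of_nonneg (basisOverlap_nonneg i j)]
          exact mul_le_mul_of_nonneg_left (hrem j i) (basisOverlap_nonneg i j)
      _ = ε * ∑ i, basisOverlap u (v a) i j * |μ a j - ν i| +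
            C * ∑ i, basisOverlap u (v a) i j * (μ a j - ν i) ^ 2 := by
          simp only [mul_add, Finset.sum_add_distrib, Finset.mul_sum, mul_left_comm]
      _ ≤ ε * ‖S a - T‖ + C * ‖S a - T‖ ^ 2 := by
          gcongr
          · exact sum_basisOverlap_mul_abs_sub_le (hS a) hT j
          · exact sum_basisOverlap_mul_sq_sub_le (hS a) hT j
      _ ≤ 2 * ε * ‖S a - T‖ := by nlinarith [norm_nonneg (S a - T)]
  rw [sum_comp_eigenvalue_sub_eq_sum_remainder (hS a) hT, Real.norm_eq_abs]
  calc _ ≤ ∑ _j : κ, 2 * ε * ‖S a - T‖ :=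
        (Finset.abs_sum_le_sum_abs _ _).trans (Finset.sum_le_sum fun j _ => hcol j)
    _ ≤ (Fintype.card κ + 1) * (2 * ε * ‖S a - T‖) := by
        rw [Finset.sum_const, nsmul_eq_mul, Finset.card_univ]
        gcongr
        linarith
    _ = c * ‖S a - T‖ := by rw [hε_def]; field_simp

variable [NormedSpace ℝ E] [IsScalarTower ℝ 𝕜 E]

lemma hasDerivAt_re_inner_clm_apply {T : ℝ → E →L[𝕜] E} {T' : E →L[𝕜] E} {t₀ : ℝ}
    (hT : HasDerivAt T T' t₀) (x y : E) :
    HasDerivAt (fun t => re ⟪x, T t y⟫_𝕜) (re ⟪x, T' y⟫_𝕜) t₀ :=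
  (reCLM (K := 𝕜)).hasFDerivAt.comp_hasDerivAt t₀
    ((((innerSL 𝕜 x).comp (ContinuousLinearMap.apply 𝕜 E y)).restrictScalars ℝ).hasFDerivAt
      |>.comp_hasDerivAt t₀ hT)

theorem hasDerivAt_sum_comp_eigenvalue {T : ℝ → E →L[𝕜] E} {T' : E →L[𝕜] E} {t₀ : ℝ}
    (hT : HasDerivAt T T' t₀) {v : ℝ → OrthonormalBasis κ 𝕜 E} {μ : ℝ → κ → ℝ}
    (hv : ∀ t j, T t (v t j) = (μ t j : 𝕜) • v t j) (hu : ∀ i, T t₀ (u i) = (ν i : 𝕜) • u i)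
    {f : ℝ → ℝ} {f' : ι → ℝ} (hf : ∀ i, HasDerivAt f (f' i) (ν i)) :
    HasDerivAt (fun t => ∑ j, f (μ t j)) (∑ i, f' i * re ⟪u i, T' (u i)⟫_𝕜) t₀ := by
  have hremainder : HasDerivAt (fun t => ∑ j, f (μ t j) - ∑ i, f (ν i) -
      ∑ i, f' i * re ⟪u i, (T t - T t₀) (u i)⟫_𝕜) 0 t₀ := by
    rw [hasDerivAt_iff_isLittleO]
    simpa [sum_comp_eigenvalue_congr (hv t₀) hu] using
      (isLittleO_sum_comp_eigenvalue hT.continuousAt hv hu hf).trans_isBigO hT.isBigO_sub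
  have hlinear : HasDerivAt (fun t => ∑ i, f' i * re ⟪u i, (T t - T t₀) (u i)⟫_𝕜)
      (∑ i, f' i * re ⟪u i, T' (u i)⟫_𝕜) t₀ :=
    HasDerivAt.fun_sum fun i _ =>
      (hasDerivAt_re_inner_clm_apply (hT.sub_const (T t₀)) _ _).const_mul _
  simpa using (hremainder.add hlinear).add_const (∑ i, f (ν i))

end TraceFunction

section SingularValues

lemma realSign_eq_div_abs (x : ℝ) : Real.sign x = x / |x| := by
  rcases lt_trichotomy x 0 with hx | rfl | hx
  · rw [Real.sign_of_neg hx, abs_of_neg hx, div_neg, div_self hx.ne]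
  · simp
  · rw [Real.sign_of_pos hx, abs_of_pos hx, div_self hx.ne']

variable {E ι κ : Type*} [NormedAddCommGroup E] [InnerProductSpace ℂ E] [CompleteSpace E]
  [Fintype ι] [Fintype κ] {u v : OrthonormalBasis ι ℂ E} {s : ι → ℝ}

lemma star_mul_self_apply_of_singularBasis {T : E →L[ℂ] E}
    (hT : ∀ i, T (u i) = (s i : ℂ) • v i) (i : ι) :
    (star T * T) (u i) = ((s i ^ 2 : ℝ) : ℂ) • u i := by
  classical
  refine InnerProductSpace.ext_inner_left_basis u.toBasis fun k => ?_
  rw [u.coe_toBasis, mul_apply_eq_comp, ContinuousLinearMap.star_eq_adjoint,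
    ContinuousLinearMap.adjoint_inner_right, hT, hT, inner_smul_left, inner_smul_right,
    inner_smul_right, u.inner_eq_ite, v.inner_eq_ite]
  split_ifs with h <;> simp [h, sq]

lemma hasDerivAt_star_mul_self {T : ℝ → E →L[ℂ] E} {T' : E →L[ℂ] E} {t₀ : ℝ}
    (hT : HasDerivAt T T' t₀) :
    HasDerivAt (fun t => star (T t) * T t) (star T' * T t₀ + star (T t₀) * T') t₀ := by
  have : StarModule ℝ (E →L[ℂ] E) := ⟨fun r X => by simp⟩
  exact hT.star.mul hT

lemma sum_comp_singularValue_congr {T : E →L[ℂ] E} {w : OrthonormalBasis κ ℂ E} {μ : κ → ℝ}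
    (hw : ∀ j, (star T * T) (w j) = (μ j : ℂ) • w j) (huv : ∀ i, T (u i) = (s i : ℂ) • v i)
    (g : ℝ → ℝ) : ∑ j, g (√(μ j)) = ∑ i, g |s i| :=
  (sum_comp_eigenvalue_congr hw (star_mul_self_apply_of_singularBasis huv) fun x => g (√x)).trans
    (Finset.sum_congr rfl fun i _ => congrArg g (Real.sqrt_sq_eq_abs (s i)))

theorem hasDerivAt_sum_comp_singularValue {T : ℝ → E →L[ℂ] E} {T' : E →L[ℂ] E} {t₀ : ℝ}
    (hT : HasDerivAt T T' t₀) {w : ℝ → OrthonormalBasis κ ℂ E} {μ : ℝ → κ → ℝ}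
    (hw : ∀ t j, (star (T t) * T t) (w t j) = (μ t j : ℂ) • w t j) (hs : ∀ i, s i ≠ 0)
    (huv : ∀ i, T t₀ (u i) = (s i : ℂ) • v i)
    {g : ℝ → ℝ} {g' : ι → ℝ} (hg : ∀ i, HasDerivAt g (g' i) |s i|) :
    HasDerivAt (fun t => ∑ j, g (√(μ t j)))
      (∑ i, g' i * Real.sign (s i) * re ⟪v i, T' (u i)⟫_ℂ) t₀ := by
  have hgsqrt (i : ι) : HasDerivAt (fun x => g (√x)) (g' i * (1 / (2 * |s i|))) (s i ^ 2) := by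
    have hsqrt := Real.hasDerivAt_sqrt (pow_ne_zero 2 (hs i))
    rw [Real.sqrt_sq_eq_abs] at hsqrt
    exact HasDerivAt.comp (s i ^ 2) (by simpa only [Real.sqrt_sq_eq_abs] using hg i) hsqrt
  have hinner (i : ι) : re ⟪u i, (star T' * T t₀ + star (T t₀) * T') (u i)⟫_ℂ =
      2 * (s i * re ⟪v i, T' (u i)⟫_ℂ) := by
    simp only [_root_.add_apply, mul_apply_eq_comp, inner_add_right,
      ContinuousLinearMap.star_eq_adjoint, ContinuousLinearMap.adjoint_inner_right, huv]
    rw [← inner_conj_symm, map_add, conj_re, inner_smul_left, Complex.conj_ofReal, re_to_complex,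
      Complex.re_ofReal_mul, two_mul, re_to_complex]
  convert hasDerivAt_sum_comp_eigenvalue (hasDerivAt_star_mul_self hT) hw
    (star_mul_self_apply_of_singularBasis huv) hgsqrt using 1
  refine Finset.sum_congr rfl fun i _ => ?_
  have habs : |s i| ≠ 0 := abs_ne_zero.2 (hs i)
  rw [hinner, realSign_eq_div_abs]
  field_simp

end SingularValues

section Matrices

variable {n : Type*} [Fintype n] [DecidableEq n]

lemma hasDerivAt_toEuclideanCLM {A : ℝ → Matrix n n ℂ} {A' : Matrix n n ℂ} {t₀ : ℝ}
    (hA : ∀ i j, HasDerivAt (fun t => A t i j) (A' i j) t₀) :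
    HasDerivAt (fun t => toEuclideanCLM (𝕜 := ℂ) (A t)) (toEuclideanCLM (𝕜 := ℂ) A') t₀ := by
  let L : (n → n → ℂ) →ₗ[ℝ] (EuclideanSpace ℂ n →L[ℂ] EuclideanSpace ℂ n) :=
    (toEuclideanCLM (n := n) (𝕜 := ℂ)).toAlgEquiv.toLinearMap.restrictScalars ℝ
  exact L.toContinuousLinearMap.hasFDerivAt.comp_hasDerivAt t₀
    (hasDerivAt_pi.2 fun i => hasDerivAt_pi.2 (hA i))

lemma exists_orthonormalBasis_of_dotProduct {u : n → n → ℂ}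
    (hu : ∀ i j, star (u i) ⬝ᵥ u j = if i = j then 1 else 0) :
    ∃ b : OrthonormalBasis n ℂ (EuclideanSpace ℂ n), ∀ i, b i = WithLp.toLp 2 (u i) := by
  have horth : Orthonormal ℂ fun i => (WithLp.toLp 2 (u i) : EuclideanSpace ℂ n) := by
    refine orthonormal_iff_ite.2 fun i j => ?_
    rw [EuclideanSpace.inner_toLp_toLp, dotProduct_comm, hu]
  have hspan := horth.linearIndependent.span_eq_top_of_card_eq_finrank' finrank_euclideanSpace.symm
  exact ⟨OrthonormalBasis.mk horth hspan.ge, fun i => by rw [OrthonormalBasis.coe_mk]⟩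

lemma star_mul_self_toEuclideanCLM_eigenvectorBasis (X : Matrix n n ℂ) (j : n) :
    (star (toEuclideanCLM (𝕜 := ℂ) X) * toEuclideanCLM (𝕜 := ℂ) X)
        ((posSemidef_conjTranspose_mul_self X).1.eigenvectorBasis j) =
      ((posSemidef_conjTranspose_mul_self X).1.eigenvalues j : ℂ) •
        (posSemidef_conjTranspose_mul_self X).1.eigenvectorBasis j := by
  rw [← map_star, ← map_mul]
  exact WithLp.ofLp_injective 2
    ((posSemidef_conjTranspose_mul_self X).1.mulVec_eigenvectorBasis j)

variable {s : n → ℝ} {u v : n → n → ℂ}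

lemma exists_singularBases {X : Matrix n n ℂ}
    (hu : ∀ i j, star (u i) ⬝ᵥ u j = if i = j then 1 else 0)
    (hv : ∀ i j, star (v i) ⬝ᵥ v j = if i = j then 1 else 0)
    (huv : ∀ i, X *ᵥ u i = (s i : ℂ) • v i) :
    ∃ b c : OrthonormalBasis n ℂ (EuclideanSpace ℂ n), (∀ i, b i = WithLp.toLp 2 (u i)) ∧
      (∀ i, c i = WithLp.toLp 2 (v i)) ∧
      ∀ i, toEuclideanCLM (𝕜 := ℂ) X (b i) = (s i : ℂ) • c i := by
  obtain ⟨b, hb⟩ := exists_orthonormalBasis_of_dotProduct hu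
  obtain ⟨c, hc⟩ := exists_orthonormalBasis_of_dotProduct hv
  exact ⟨b, c, hb, hc, fun i => by rw [hb, hc, toEuclideanCLM_toLp, huv, WithLp.toLp_smul]⟩

lemma sum_singularValue_rpow_eq {X : Matrix n n ℂ}
    (hu : ∀ i j, star (u i) ⬝ᵥ u j = if i = j then 1 else 0)
    (hv : ∀ i j, star (v i) ⬝ᵥ v j = if i = j then 1 else 0)
    (huv : ∀ i, X *ᵥ u i = (s i : ℂ) • v i) (p : ℝ) :
    ∑ j, √((posSemidef_conjTranspose_mul_self X).1.eigenvalues j) ^ p = ∑ i, |s i| ^ p := by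
  obtain ⟨b, c, -, -, hbc⟩ := exists_singularBases hu hv huv
  exact sum_comp_singularValue_congr (star_mul_self_toEuclideanCLM_eigenvectorBasis X) hbc (· ^ p)

lemma hasDerivAt_sum_singularValue_rpow {A : ℝ → Matrix n n ℂ} {A' : Matrix n n ℂ} {t₀ : ℝ}
    (hderiv : ∀ i j, HasDerivAt (fun t => A t i j) (A' i j) t₀) (hs : ∀ i, s i ≠ 0)
    (hu : ∀ i j, star (u i) ⬝ᵥ u j = if i = j then 1 else 0)
    (hv : ∀ i j, star (v i) ⬝ᵥ v j = if i = j then 1 else 0)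
    (huv : ∀ i, A t₀ *ᵥ u i = (s i : ℂ) • v i) (p : ℝ) :
    HasDerivAt (fun t => ∑ j, √((posSemidef_conjTranspose_mul_self (A t)).1.eigenvalues j) ^ p)
      (p * ∑ i, Real.sign (s i) * |s i| ^ (p - 1) * (star (v i) ⬝ᵥ (A' *ᵥ u i)).re) t₀ := by
  obtain ⟨b, c, hb, hc, hbc⟩ := exists_singularBases hu hv huv
  convert hasDerivAt_sum_comp_singularValue (hasDerivAt_toEuclideanCLM hderiv)
    (fun t => star_mul_self_toEuclideanCLM_eigenvectorBasis (A t)) hs hbc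
    (fun i => Real.hasDerivAt_rpow_const (p := p) (Or.inl (abs_ne_zero.2 (hs i)))) using 1
  rw [Finset.mul_sum]
  refine Finset.sum_congr rfl fun i _ => ?_
  rw [hb, hc, toEuclideanCLM_toLp, EuclideanSpace.inner_toLp_toLp, dotProduct_comm, re_to_complex]
  ring

/-- The singular values `s i` carry signs, so that the spectral decomposition of a Hermitian matrix
is the case `v = u`. -/
theorem schattenNorm_hasDerivAt_general [Nonempty n] (p : ℝ) (hp : p ≠ 0)
    (A : ℝ → Matrix n n ℂ) (A' : Matrix n n ℂ) (t₀ : ℝ)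
    (hderiv : ∀ i j, HasDerivAt (fun t => A t i j) (A' i j) t₀)
    (s : n → ℝ) (u v : n → n → ℂ) (hs : ∀ i, s i ≠ 0)
    (hu : ∀ i j, star (u i) ⬝ᵥ u j = if i = j then 1 else 0)
    (hv : ∀ i j, star (v i) ⬝ᵥ v j = if i = j then 1 else 0)
    (huv : ∀ i, A t₀ *ᵥ u i = (s i : ℂ) • v i) :
    HasDerivAt (fun t => schattenNorm p (A t))
      (schattenNorm p (A t₀) ^ (1 - p) *
        ∑ i, Real.sign (s i) * |s i| ^ (p - 1) * (star (v i) ⬝ᵥ (A' *ᵥ u i)).re) t₀ := by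
  have hpos : 0 < ∑ j, √((posSemidef_conjTranspose_mul_self (A t₀)).1.eigenvalues j) ^ p := by
    rw [sum_singularValue_rpow_eq hu hv huv]
    exact Finset.sum_pos (fun i _ => Real.rpow_pos_of_pos (abs_pos.2 (hs i)) p)
      Finset.univ_nonempty
  refine ((hasDerivAt_sum_singularValue_rpow hderiv hs hu hv huv p).rpow_const (p := 1 / p)
    (Or.inl hpos.ne')).congr_deriv ?_
  have hexp : 1 / p * (1 - p) = 1 / p - 1 := by field_simp
  rw [schattenNorm, ← Real.rpow_mul hpos.le, hexp]
  field_simp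

end Matrices

/-- **Derivative of the Schatten `p`-norm along a Hermitian path.**
If `A : ℝ → Matrix n n ℂ` is entrywise differentiable at `t₀` with derivative `A'`, each
`A t` is Hermitian, and `A t₀` is invertible with nonzero real eigenvalues `lam i` and
orthonormal eigenvectors `u i`, then `t ↦ ‖A t‖_p` is differentiable at `t₀` with derivative
`‖A t₀‖_p^{1−p} · Σᵢ sgn(lam i)·|lam i|^{p−1}·Re⟨u i, A'·u i⟩`. -/
theorem schattenNorm_hasDerivAt {n : Type*} [Fintype n] [DecidableEq n] [Nonempty n]
    (p : ℝ) (hp : 1 ≤ p)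
    (A : ℝ → Matrix n n ℂ) (A' : Matrix n n ℂ) (t₀ : ℝ)
    (hderiv : ∀ i j, HasDerivAt (fun t => A t i j) (A' i j) t₀)
    (hherm : ∀ t, (A t).IsHermitian)
    (hinv : IsUnit (A t₀))
    (lam : n → ℝ) (u : n → n → ℂ)
    (hlam : ∀ i, lam i ≠ 0)
    (hortho : ∀ i j, star (u i) ⬝ᵥ u j = if i = j then 1 else 0)
    (heig : ∀ i, (A t₀) *ᵥ u i = (lam i : ℂ) • u i) :
    HasDerivAt (fun t => schattenNorm p (A t))
      (schattenNorm p (A t₀) ^ (1 - p) *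
        ∑ i, Real.sign (lam i) * |lam i| ^ (p - 1) *
          (star (u i) ⬝ᵥ (A' *ᵥ u i)).re) t₀ :=
  schattenNorm_hasDerivAt_general p (by positivity) A A' t₀ hderiv lam u u hlam hortho hortho heig
end
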